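/- Let G = (V,E) be a Δ-regular finite simple graph, let τ ∈ (0,1) with τ ≤ 1/Δ, and consider the one-versus-one swap Schelling game (1-1-SSG) with bijective placements and any number of types. Then along any sequence of improving swaps each agent participates in at most one swap (any agent who has performed an improving swap is content afterwards and remains content); consequently every sequence of improving swaps has length at most |A|, where A is the set of agents, and improving response dynamics always reach a swap-stable placement in O(|A|) moves. -/

import Mathlib

open Finset
open scoped Classical

noncomputable section

namespace Schelling

variable {V A : Type*} [Fintype V] [Fintype A] {k : ℕ}

/-- The set of neighbors of agent `a` under placement `p`. -/
def nbrs (G : SimpleGraph V) (p : A → V) (a : A) : Finset A :=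
  Finset.univ.filter fun b => G.Adj (p a) (p b)

/-- `|N⁺_p(a)|`: the number of neighbors of `a` under `p` having the same type as `a`. -/
def posCount (G : SimpleGraph V) (t : A → Fin k) (p : A → V) (a : A) : ℕ :=
  (Finset.univ.filter fun b => G.Adj (p a) (p b) ∧ t b = t a).card

/-- One-versus-all `|N⁻_p(a)|`: the number of neighbors of `a` whose type differs from `t a`. -/
def negCountAll (G : SimpleGraph V) (t : A → Fin k) (p : A → V) (a : A) : ℕ :=
  (Finset.univ.filter fun b => G.Adj (p a) (p b) ∧ t b ≠ t a).card

/-- One-versus-one `|N⁻_p(a)|`: the size of a largest set of neighbors of `a`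
of one common type different from `t a`. -/
def negCountOne (G : SimpleGraph V) (t : A → Fin k) (p : A → V) (a : A) : ℕ :=
  (Finset.univ.filter fun T : Fin k => T ≠ t a).sup fun T =>
    (Finset.univ.filter fun b => G.Adj (p a) (p b) ∧ t b = T).card

/-- The cost of agent `a` in the one-versus-all version. -/
def costAll (G : SimpleGraph V) (t : A → Fin k) (τ : ℝ) (p : A → V) (a : A) : ℝ :=
  if nbrs G p a = ∅ then τ
  else max 0 (τ - (posCount G t p a : ℝ) /
    ((posCount G t p a : ℝ) + (negCountAll G t p a : ℝ)))

/-- The cost of agent `a` in the one-versus-one version. -/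
def costOne (G : SimpleGraph V) (t : A → Fin k) (τ : ℝ) (p : A → V) (a : A) : ℝ :=
  if nbrs G p a = ∅ then τ
  else max 0 (τ - (posCount G t p a : ℝ) /
    ((posCount G t p a : ℝ) + (negCountOne G t p a : ℝ)))

/-- A swap of the (distinct) agents `a` and `b` turning placement `p` into `q`,
which strictly decreases the cost of both agents (cost function `c`). -/
def SwapMove (c : (A → V) → A → ℝ) (p q : A → V) (a b : A) : Prop :=
  a ≠ b ∧ q = p ∘ (Equiv.swap a b) ∧ c q a < c p a ∧ c q b < c p b

/-- `q` is obtained from `p` by an improving swap. -/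
def ImprovingSwap (c : (A → V) → A → ℝ) (p q : A → V) : Prop :=
  ∃ a b, SwapMove c p q a b

/-- A placement is swap-stable if it admits no improving swap. -/
def SwapStable (c : (A → V) → A → ℝ) (p : A → V) : Prop :=
  ∀ q, ¬ ImprovingSwap c p q

/-- Some finite sequence of improving swaps starting at `p₀` ends in a swap-stable placement. -/
def ReachesStableSwap (c : (A → V) → A → ℝ) (p₀ : A → V) : Prop :=
  ∃ (n : ℕ) (q : ℕ → A → V), q 0 = p₀ ∧
    (∀ i < n, ImprovingSwap c (q i) (q (i + 1))) ∧ SwapStable c (q n)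

/-- A jump of agent `a` to the node `v` (unoccupied under `p`) turning placement `p`
into `q`, which strictly decreases the cost of `a` (cost function `c`). -/
def JumpMove (c : (A → V) → A → ℝ) (p q : A → V) (a : A) (v : V) : Prop :=
  (∀ b, p b ≠ v) ∧ q = Function.update p a v ∧ c q a < c p a

/-- `q` is obtained from `p` by an improving jump. -/
def ImprovingJump (c : (A → V) → A → ℝ) (p q : A → V) : Prop :=
  ∃ a v, JumpMove c p q a v

/-- A placement is jump-stable if it admits no improving jump. -/
def JumpStable (c : (A → V) → A → ℝ) (p : A → V) : Prop :=
  ∀ q, ¬ ImprovingJump c p q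

/-- Some finite sequence of improving jumps starting at `p₀` ends in a jump-stable placement. -/
def ReachesStableJump (c : (A → V) → A → ℝ) (p₀ : A → V) : Prop :=
  ∃ (n : ℕ) (q : ℕ → A → V), q 0 = p₀ ∧
    (∀ i < n, ImprovingJump c (q i) (q (i + 1))) ∧ JumpStable c (q n)

/-- The placement cost: the number of discontent agents (one-versus-all cost). -/
def placementCost (G : SimpleGraph V) (t : A → Fin k) (τ : ℝ) (p : A → V) : ℕ :=
  (Finset.univ.filter fun a => costAll G t τ p a ≠ 0).card

/-- A graph is `Δ`-regular if every node has exactly `Δ` neighbors. -/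
def IsRegular (G : SimpleGraph V) (Δ : ℕ) : Prop :=
  ∀ v : V, (Finset.univ.filter fun u => G.Adj v u).card = Δ

/-!
Since `τ · deg ≤ 1`, a single neighbor of one's own type already makes an agent content, while an
agent without one pays the full cost `τ`. An improving swap therefore exchanges two agents without
such neighbors and gives one to each. Two adjacent agents of the same type satisfy each other, so
neither of them takes part in the swap and they stay adjacent. Hence the set of agents having a
neighbor of their own type only grows, and each swap adds its two participants to it.
-/

section

variable {V A : Type*} {c : (A → V) → A → ℝ} {p q p₀ : A → V} {seq : ℕ → A → V} {a b : A} {n N : ℕ}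

lemma ImprovingSwap.injective (h : ImprovingSwap c p q) (hp : p.Injective) : q.Injective := by
  obtain ⟨a, b, -, rfl, -⟩ := h
  exact hp.comp (Equiv.swap a b).injective

lemma injective_of_improvingSwaps (h0 : (seq 0).Injective)
    (hseq : ∀ i < n, ImprovingSwap c (seq i) (seq (i + 1))) : ∀ i ≤ n, (seq i).Injective
  | 0, _ => h0
  | i + 1, hi => (hseq i hi).injective (injective_of_improvingSwaps h0 hseq i (by omega))

lemma reachesStableSwap_of_length_le
    (hN : ∀ n (seq : ℕ → A → V), seq 0 = p₀ →
      (∀ i < n, ImprovingSwap c (seq i) (seq (i + 1))) → n ≤ N) :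
    ReachesStableSwap c p₀ := by
  by_contra hstable
  have exists_seq (n : ℕ) : ∃ seq : ℕ → A → V, seq 0 = p₀ ∧
      ∀ i < n, ImprovingSwap c (seq i) (seq (i + 1)) := by
    induction n with
    | zero => exact ⟨fun _ => p₀, rfl, by simp⟩
    | succ n ih =>
      obtain ⟨seq, h0, hseq⟩ := ih
      obtain ⟨q, hq⟩ : ∃ q, ImprovingSwap c (seq n) q := by
        by_contra! hn
        exact hstable ⟨n, seq, h0, hseq, hn⟩
      refine ⟨Function.update seq (n + 1) q, by simpa using h0, fun i hi => ?_⟩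
      rcases Nat.lt_succ_iff_lt_or_eq.mp hi with hi | rfl
      · simpa [hi.ne, (Nat.lt_succ_of_lt hi).ne] using hseq i hi
      · simpa using hq
  obtain ⟨seq, h0, hseq⟩ := exists_seq (N + 1)
  exact (Nat.lt_succ_self N).not_ge (hN (N + 1) seq h0 hseq)

variable [Fintype A]

/-- The agents having a neighbor of their own type, that is, those with `N⁺_p(a) ≠ ∅`. Under low
intolerance these are the content agents, and their number is a potential of the game. -/
def befriended {T : Type*} (G : SimpleGraph V) (t : A → T) (p : A → V) : Finset A :=
  {a | ∃ b, G.Adj (p a) (p b) ∧ t b = t a}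

section

variable {T : Type*} {G : SimpleGraph V} {t : A → T}

lemma mem_befriended : a ∈ befriended G t p ↔ ∃ b, G.Adj (p a) (p b) ∧ t b = t a := by
  simp [befriended]

lemma befriended_subset_comp_swap (ha : a ∉ befriended G t p) (hb : b ∉ befriended G t p) :
    befriended G t p ⊆ befriended G t (p ∘ Equiv.swap a b) := by
  have stays {x : A} (hx : x ∈ befriended G t p) : Equiv.swap a b x = x :=
    Equiv.swap_apply_of_ne_of_ne (ne_of_mem_of_not_mem hx ha) (ne_of_mem_of_not_mem hx hb)
  intro x hx
  obtain ⟨y, hadj, htype⟩ := mem_befriended.mp hx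
  have hy : y ∈ befriended G t p := mem_befriended.mpr ⟨x, hadj.symm, htype.symm⟩
  refine mem_befriended.mpr ⟨y, ?_, htype⟩
  simpa only [Function.comp_apply, stays hx, stays hy] using hadj

end

variable {k : ℕ} {G : SimpleGraph V} {t : A → Fin k} {τ : ℝ}

lemma posCount_pos_iff : 0 < posCount G t p a ↔ a ∈ befriended G t p := by
  simp [posCount, befriended, Finset.card_pos, Finset.filter_nonempty_iff]

lemma posCount_add_negCountAll : posCount G t p a + negCountAll G t p a = #(nbrs G p a) := by
  simp only [posCount, negCountAll, nbrs, ← Finset.filter_filter,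
    Finset.card_filter_add_card_filter_not]

lemma negCountOne_le_negCountAll : negCountOne G t p a ≤ negCountAll G t p a := by
  refine Finset.sup_le fun T hT => Finset.card_le_card ?_
  refine Finset.monotone_filter_right _ fun b _ hb => ⟨hb.1, ?_⟩
  exact hb.2 ▸ (Finset.mem_filter.mp hT).2

lemma card_nbrs_le_degree [G.LocallyFinite] (hp : p.Injective) :
    #(nbrs G p a) ≤ G.degree (p a) :=
  Finset.card_le_card_of_injOn p (fun b hb => by simpa [nbrs] using hb) hp.injOn

lemma costOne_nonneg (hτ0 : 0 ≤ τ) : 0 ≤ costOne G t τ p a := by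
  unfold costOne
  split_ifs
  exacts [hτ0, le_max_left _ _]

lemma costOne_of_notMem_befriended (hτ0 : 0 ≤ τ) (ha : a ∉ befriended G t p) :
    costOne G t τ p a = τ := by
  have hpos : posCount G t p a = 0 := by
    rwa [← posCount_pos_iff, Nat.pos_iff_ne_zero, not_not] at ha
  simp [costOne, hpos, hτ0]

lemma costOne_eq_zero_of_mem_befriended (hτ0 : 0 ≤ τ) (hτ : τ * #(nbrs G p a) ≤ 1)
    (ha : a ∈ befriended G t p) : costOne G t τ p a = 0 := by
  have hpos : 0 < posCount G t p a := posCount_pos_iff.mpr ha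
  have hle : posCount G t p a + negCountOne G t p a ≤ #(nbrs G p a) :=
    posCount_add_negCountAll (t := t) ▸ Nat.add_le_add_left negCountOne_le_negCountAll _
  have hnbrs : nbrs G p a ≠ ∅ := Finset.card_pos.mp (by omega) |>.ne_empty
  have hfrac : τ ≤ posCount G t p a / (posCount G t p a + negCountOne G t p a : ℝ) := by
    rw [le_div_iff₀ (by positivity)]
    calc τ * (posCount G t p a + negCountOne G t p a : ℝ)
        ≤ τ * #(nbrs G p a) := by gcongr; exact_mod_cast hle
      _ ≤ 1 := hτ
      _ ≤ posCount G t p a := by exact_mod_cast hpos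
  rw [costOne, if_neg hnbrs, max_eq_left (sub_nonpos.mpr hfrac)]

section LowIntolerance

variable [G.LocallyFinite]

lemma costOne_eq_zero_of_mul_degree_le_one (hτ0 : 0 ≤ τ) (hτ : τ * G.degree (p a) ≤ 1)
    (hp : p.Injective) (ha : a ∈ befriended G t p) : costOne G t τ p a = 0 := by
  refine costOne_eq_zero_of_mem_befriended hτ0 (le_trans ?_ hτ) ha
  gcongr
  exact card_nbrs_le_degree hp

lemma befriended_of_costOne_lt_costOne (hτ0 : 0 ≤ τ) (hτ : τ * G.degree (p a) ≤ 1)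
    (hp : p.Injective) (hlt : costOne G t τ q a < costOne G t τ p a) :
    a ∉ befriended G t p ∧ a ∈ befriended G t q := by
  have hap : a ∉ befriended G t p := fun ha =>
    (costOne_nonneg hτ0).not_gt (costOne_eq_zero_of_mul_degree_le_one hτ0 hτ hp ha ▸ hlt)
  refine ⟨hap, by_contra fun haq => hlt.ne ?_⟩
  rw [costOne_of_notMem_befriended hτ0 haq, costOne_of_notMem_befriended hτ0 hap]

lemma SwapMove.befriended (hτ0 : 0 ≤ τ) (hτ : ∀ v, τ * G.degree v ≤ 1) (hp : p.Injective)
    (h : SwapMove (costOne G t τ) p q a b) :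
    Disjoint (befriended G t p) {a, b} ∧ befriended G t p ∪ {a, b} ⊆ befriended G t q := by
  obtain ⟨-, rfl, hlta, hltb⟩ := h
  obtain ⟨hap, haq⟩ := befriended_of_costOne_lt_costOne hτ0 (hτ _) hp hlta
  obtain ⟨hbp, hbq⟩ := befriended_of_costOne_lt_costOne hτ0 (hτ _) hp hltb
  constructor
  · simp [hap, hbp]
  · exact Finset.union_subset (befriended_subset_comp_swap hap hbp)
      (by simp [Finset.insert_subset_iff, haq, hbq])

lemma ImprovingSwap.befriended_subset (hτ0 : 0 ≤ τ) (hτ : ∀ v, τ * G.degree v ≤ 1)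
    (hp : p.Injective) (h : ImprovingSwap (costOne G t τ) p q) :
    befriended G t p ⊆ befriended G t q := by
  obtain ⟨a, b, hab⟩ := h
  exact Finset.union_subset_left (hab.befriended hτ0 hτ hp).2

lemma ImprovingSwap.card_befriended_add_two_le (hτ0 : 0 ≤ τ) (hτ : ∀ v, τ * G.degree v ≤ 1)
    (hp : p.Injective) (h : ImprovingSwap (costOne G t τ) p q) :
    #(befriended G t p) + 2 ≤ #(befriended G t q) := by
  obtain ⟨a, b, hab⟩ := h
  obtain ⟨hdisj, hsub⟩ := hab.befriended hτ0 hτ hp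
  rw [← Finset.card_pair hab.1, ← Finset.card_union_of_disjoint hdisj]
  exact Finset.card_le_card hsub

lemma befriended_subset_of_improvingSwaps (hτ0 : 0 ≤ τ) (hτ : ∀ v, τ * G.degree v ≤ 1)
    (h0 : (seq 0).Injective)
    (hseq : ∀ i < n, ImprovingSwap (costOne G t τ) (seq i) (seq (i + 1)))
    {i j : ℕ} (hij : i ≤ j) (hj : j ≤ n) :
    befriended G t (seq i) ⊆ befriended G t (seq j) := by
  induction j, hij using Nat.le_induction with
  | base => exact subset_rfl
  | succ j _ ih =>
    have hinj : (seq j).Injective := injective_of_improvingSwaps h0 hseq j (by omega)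
    exact (ih (by omega)).trans ((hseq j hj).befriended_subset hτ0 hτ hinj)

lemma two_mul_length_le_card (hτ0 : 0 ≤ τ) (hτ : ∀ v, τ * G.degree v ≤ 1)
    (h0 : (seq 0).Injective)
    (hseq : ∀ i < n, ImprovingSwap (costOne G t τ) (seq i) (seq (i + 1))) :
    2 * n ≤ Fintype.card A := by
  have two_mul_le (i : ℕ) (hi : i ≤ n) : 2 * i ≤ #(befriended G t (seq i)) := by
    induction i with
    | zero => exact Nat.zero_le _
    | succ i ih =>
      have hinj : (seq i).Injective := injective_of_improvingSwaps h0 hseq i (by omega)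
      have hstep := (hseq i hi).card_befriended_add_two_le hτ0 hτ hinj
      have := ih (by omega)
      omega
  exact (two_mul_le n le_rfl).trans (Finset.card_le_univ _)

end LowIntolerance

end

theorem statement3_general {V A : Type*} [Fintype A] {k : ℕ} (G : SimpleGraph V)
    [G.LocallyFinite] (t : A → Fin k) {τ : ℝ} (hτ0 : 0 ≤ τ) (hτ : ∀ v, τ * G.degree v ≤ 1) :
    (∀ (n : ℕ) (seq : ℕ → A → V) (mv : ℕ → A × A),
        Function.Injective (seq 0) →
        (∀ i < n, SwapMove (costOne G t τ) (seq i) (seq (i + 1)) (mv i).1 (mv i).2) →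
        (∀ i, i < n → ∀ j, i < j → j ≤ n →
            costOne G t τ (seq j) (mv i).1 = 0 ∧ costOne G t τ (seq j) (mv i).2 = 0) ∧
        (∀ i j, i < j → j < n → ∀ a, (a = (mv i).1 ∨ a = (mv i).2) →
            a ≠ (mv j).1 ∧ a ≠ (mv j).2) ∧
        2 * n ≤ Fintype.card A) ∧
    (∀ p₀ : A → V, Function.Injective p₀ → ReachesStableSwap (costOne G t τ) p₀) := by
  refine ⟨fun n seq mv h0 hmv => ?_, fun p₀ h0 => reachesStableSwap_of_length_le
    (N := Fintype.card A) fun n seq hp₀ hseq => ?_⟩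
  · have hseq : ∀ i < n, ImprovingSwap (costOne G t τ) (seq i) (seq (i + 1)) :=
      fun i hi => ⟨_, _, hmv i hi⟩
    have hinj := injective_of_improvingSwaps h0 hseq
    have swappers_befriended {i j : ℕ} (hij : i < j) (hj : j ≤ n) :
        {(mv i).1, (mv i).2} ⊆ befriended G t (seq j) :=
      (Finset.union_subset_right ((hmv i (by omega)).befriended hτ0 hτ (hinj i (by omega))).2).trans
        (befriended_subset_of_improvingSwaps hτ0 hτ h0 hseq hij hj)
    refine ⟨fun i _ j hij hj => ?_, fun i j hij hj a ha => ?_,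
      two_mul_length_le_card hτ0 hτ h0 hseq⟩
    · constructor <;>
        exact costOne_eq_zero_of_mul_degree_le_one hτ0 (hτ _) (hinj j hj)
          (swappers_befriended hij hj (by simp))
    · have hnot := Finset.disjoint_left.mp ((hmv j hj).befriended hτ0 hτ (hinj j hj.le)).1
        (swappers_befriended hij hj.le (by simpa using ha))
      simpa using hnot
  · have := two_mul_length_le_card hτ0 hτ (hp₀ ▸ h0) hseq
    omega

/-- In the `1`-`1`-SSG on a `Δ`-regular graph with `τ ≤ 1/Δ`: along any sequence of
improving swaps, each swapping agent is content in every later placement, each agent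
participates in at most one swap, hence every such sequence has length at most `|A|`,
and IRD always reach a swap-stable placement. -/
theorem statement3 {V A : Type*} [Fintype V] [Fintype A] {k : ℕ}
    (G : SimpleGraph V) (Δ : ℕ) (hreg : IsRegular G Δ)
    (t : A → Fin k) (ht : Function.Surjective t)
    (hcard : Fintype.card A = Fintype.card V)
    (τ : ℝ) (hτ0 : 0 < τ) (hτ1 : τ < 1) (hτΔ : τ ≤ 1 / (Δ : ℝ)) :
    (∀ (n : ℕ) (seq : ℕ → A → V) (mv : ℕ → A × A),
        Function.Bijective (seq 0) →
        (∀ i < n, SwapMove (costOne G t τ) (seq i) (seq (i + 1)) (mv i).1 (mv i).2) →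
        (∀ i, i < n → ∀ j, i < j → j ≤ n →
            costOne G t τ (seq j) (mv i).1 = 0 ∧ costOne G t τ (seq j) (mv i).2 = 0) ∧
        (∀ i j, i < j → j < n → ∀ a, (a = (mv i).1 ∨ a = (mv i).2) →
            a ≠ (mv j).1 ∧ a ≠ (mv j).2) ∧
        n ≤ Fintype.card A) ∧
    (∀ p₀ : A → V, Function.Bijective p₀ → ReachesStableSwap (costOne G t τ) p₀) := by
  have hdeg (v : V) : τ * G.degree v ≤ 1 := by
    have hv : G.degree v = Δ := by rw [← hreg v, ← G.neighborFinset_eq_filter]; rfl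
    exact hv ▸ mul_le_of_le_div₀ zero_le_one Δ.cast_nonneg hτΔ
  have hgen := statement3_general G t hτ0.le hdeg
  exact ⟨fun n seq mv h0 hmv => (hgen.1 n seq mv h0.injective hmv).imp_right
    (And.imp_right (Nat.le_mul_of_pos_left n two_pos).trans), fun p₀ h0 => hgen.2 p₀ h0.injective⟩

end Schelling
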